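/- For a positive integer n, let σ be a generator of Gal(F_{q^n}/F_q) and let D_n denote the number of triples (c_0, c_1, c_4) ∈ F_{q^n}³ such that the F_q-linear map x ↦ c_0·x + c_1·σ(x) + c_4·σ⁴(x) on F_{q^n} has kernel of F_q-dimension exactly 4. Then: D_n = 0 for 5 ≤ n ≤ 11 with n ≠ 8; D_n = (q^n−1)²/(q^4−1) for n ∈ {8, 12}; D_13 = 0 if q is not a power of 3 and D_13 = (q^13−1)²/(q−1) if q is a power of 3; and D_15 = 0 if q is odd and D_15 = (q^15−1)²/(q−1) if q is even. -/

import Mathlib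

/-- The number of triples `(c₀, c₁, c₄) ∈ F_{q^n}³` such that the `F_q`-linear map
`x ↦ c₀·x + c₁·σ(x) + c₄·σ⁴(x)` has kernel of `F_q`-dimension exactly `4`. -/
noncomputable def weightCount4 (K L : Type*) [Field K] [Field L] [Algebra K L]
    (σ : L ≃ₐ[K] L) : ℕ :=
  Nat.card {c : L × L × L //
    Module.finrank K
      (LinearMap.ker
        (LinearMap.mulLeft K c.1 + LinearMap.mulLeft K c.2.1 ∘ₗ σ.toLinearMap
          + LinearMap.mulLeft K c.2.2 ∘ₗ (σ ^ 4 : L ≃ₐ[K] L).toLinearMap)) = 4}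

/-!
If `σ ^ 4 - b σ - a` has a kernel of dimension `4`, then dividing `σ ^ n - 1` by it on the right
leaves a remainder of `σ`-degree less than `4` that vanishes on this kernel, hence is zero. So the
remainder of `σ ^ n` is `1`, which is a system of polynomial equations in the conjugates of `a`
and `b`. For `5 ≤ n ≤ 11`, `n ≠ 8`, one of the equations is contradictory. In the other cases the
equations force characteristic `3` if `n = 13` and `2` if `n = 15`, and they determine the norm of
`a` or `b` to a suitable subfield. Hilbert 90 then provides a substitution `x ↦ ν x` carrying the
trinomial to `σ ^ 4 - 1` or to `σ ^ 4 + σ + 1`. That these have kernel of dimension `4` comes from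
`X ^ 4 - 1` dividing `X ^ 8 - 1` and `X ^ 12 - 1`, and `X ^ 4 + X + 1` dividing `X ^ 13 - 1` in
characteristic `3` and `X ^ 15 - 1` in characteristic `2`. The triples sought therefore form at
most one orbit under `f(x) ↦ μ f(ν x)`, which the orbit-stabilizer theorem counts.
-/

open Finset Module Polynomial

section CyclicExtension

variable {K L : Type*} [Field K] [Field L] [Algebra K L] {σ : L ≃ₐ[K] L}

theorem mem_fixedField_zpowers_iff {x : L} :
    x ∈ IntermediateField.fixedField (Subgroup.zpowers σ) ↔ σ x = x := by
  refine ⟨fun hx => hx ⟨σ, Subgroup.mem_zpowers σ⟩, fun hx => ?_⟩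
  rintro ⟨_, k, rfl⟩
  exact (MulAction.stabilizer (L ≃ₐ[K] L) x).zpow_mem hx k

theorem finrank_fixedField_zpowers_mul_orderOf [FiniteDimensional K L] (σ : L ≃ₐ[K] L) :
    finrank K (IntermediateField.fixedField (Subgroup.zpowers σ)) * orderOf σ = finrank K L := by
  rw [← Nat.card_zpowers, ← IntermediateField.finrank_fixedField_eq_card, finrank_mul_finrank]

theorem fixed_mem_range_algebraMap [FiniteDimensional K L] (hσ : orderOf σ = finrank K L) {x : L}
    (hx : σ x = x) : x ∈ Set.range (algebraMap K L) := by
  have hmul := finrank_fixedField_zpowers_mul_orderOf σ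
  rw [hσ, Nat.mul_eq_right finrank_pos.ne', IntermediateField.finrank_eq_one_iff] at hmul
  exact IntermediateField.mem_bot.mp (hmul ▸ mem_fixedField_zpowers_iff.mpr hx)

/-- The `K`-linear map `x ↦ σ (x / u) - x / u`, which has kernel `K u` when `K` is the fixed field
of `σ`. Replacing a space containing `u` by its image lowers the dimension by one. -/
def twistedDifference (σ : L ≃ₐ[K] L) (u : L) : L →ₗ[K] L :=
  (σ.toLinearMap - LinearMap.id) ∘ₗ LinearMap.mulRight K u⁻¹

theorem finrank_le_finrank_map_twistedDifference_add_one
    (hfix : ∀ x, σ x = x → x ∈ Set.range (algebraMap K L)) {u : L} (hu : u ≠ 0)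
    (V : Submodule K L) [FiniteDimensional K V] :
    finrank K V ≤ finrank K (V.map (twistedDifference σ u)) + 1 := by
  let ψ := (twistedDifference σ u).domRestrict V
  have hker : (LinearMap.ker ψ).map V.subtype ≤ K ∙ u := by
    rintro _ ⟨x, hx, rfl⟩
    obtain ⟨k, hk⟩ := hfix _ (sub_eq_zero.mp (LinearMap.mem_ker.mp hx))
    refine Submodule.mem_span_singleton.mpr ⟨k, ?_⟩
    rw [Algebra.smul_def, hk]
    exact inv_mul_cancel_right₀ hu _
  have hker_le : finrank K (LinearMap.ker ψ) ≤ 1 := by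
    rw [(Submodule.equivMapOfInjective _ V.injective_subtype (LinearMap.ker ψ)).finrank_eq,
      ← finrank_span_singleton (K := K) hu]
    exact Submodule.finrank_mono hker
  have hrange : LinearMap.range ψ = V.map (twistedDifference σ u) :=
    LinearMap.range_domRestrict _ _
  rw [← ψ.finrank_range_add_finrank_ker, hrange]
  lia

theorem sum_mul_pow_apply_mul_eq_sum_partialSum (c : ℕ → L) (u z : L) (m : ℕ) :
    ∑ i ∈ range (m + 1), c i * (σ ^ i) (u * z) =
      (σ ^ m) z * ∑ i ∈ range (m + 1), c i * (σ ^ i) u -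
        ∑ i ∈ range m, (∑ j ∈ range (i + 1), c j * (σ ^ j) u) * (σ ^ i) (σ z - z) := by
  have h := sum_range_by_parts (fun i => (σ ^ i) z) (fun i => c i * (σ ^ i) u) (m + 1)
  simp only [smul_eq_mul, add_tsub_cancel_right] at h
  calc _ = ∑ i ∈ range (m + 1), (σ ^ i) z * (c i * (σ ^ i) u) :=
        sum_congr rfl fun i _ => by rw [map_mul]; ring
    _ = _ := by
        rw [h]
        congr 1
        refine sum_congr rfl fun i _ => ?_
        rw [map_sub, pow_succ, AlgEquiv.mul_apply, mul_comm]

theorem coeff_eq_zero_of_forall_sum_eq_zero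
    (hfix : ∀ x, σ x = x → x ∈ Set.range (algebraMap K L)) {m : ℕ} {V : Submodule K L}
    {c : ℕ → L} (hV : m < finrank K V)
    (hc : ∀ x ∈ V, ∑ i ∈ range (m + 1), c i * (σ ^ i) x = 0) : ∀ i ≤ m, c i = 0 := by
  induction m generalizing V c with
  | zero =>
    obtain ⟨u, huV, hu⟩ := V.exists_mem_ne_zero_of_ne_bot
      (by rintro rfl; simp at hV)
    simpa [hu] using hc u huV
  | succ m ih =>
    have : FiniteDimensional K V := FiniteDimensional.of_finrank_pos (by lia)
    obtain ⟨u, huV, hu⟩ := V.exists_mem_ne_zero_of_ne_bot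
      (by rintro rfl; simp at hV)
    have hpartial : ∀ i ≤ m + 1, ∑ j ∈ range (i + 1), c j * (σ ^ j) u = 0 := by
      have hW := finrank_le_finrank_map_twistedDifference_add_one hfix hu V
      have hlt := ih (V := V.map (twistedDifference σ u))
        (c := fun i => ∑ j ∈ range (i + 1), c j * (σ ^ j) u) (by lia) (by
          rintro _ ⟨x, hx, rfl⟩
          have h := sum_mul_pow_apply_mul_eq_sum_partialSum (σ := σ) c u (x * u⁻¹) (m + 1)
          rw [mul_comm u, inv_mul_cancel_right₀ hu, hc x hx, hc u huV, mul_zero, zero_sub,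
            eq_comm, neg_eq_zero] at h
          exact h)
      intro i hi
      rcases hi.lt_or_eq with hi | rfl
      · exact hlt i (by lia)
      · exact hc u huV
    intro i hi
    have hterm : c i * (σ ^ i) u = 0 := by
      rcases i with _ | i
      · simpa using hpartial 0 (by lia)
      · have h := hpartial (i + 1) hi
        rwa [sum_range_succ, hpartial i (by lia), zero_add] at h
    exact (mul_eq_zero.mp hterm).resolve_right ((_root_.map_ne_zero _).mpr hu)

theorem aeval_toLinearMap_apply (P : K[X]) (x : L) :
    aeval σ.toLinearMap P x =
      ∑ i ∈ range (P.natDegree + 1), algebraMap K L (P.coeff i) * (σ ^ i) x := by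
  simp only [aeval_eq_sum_range, LinearMap.sum_apply, LinearMap.smul_apply,
    ← AlgEquiv.pow_toLinearMap, AlgEquiv.toLinearMap_apply]
  exact sum_congr rfl fun i _ => Algebra.smul_def _ _

theorem finrank_ker_aeval_le_natDegree (hfix : ∀ x, σ x = x → x ∈ Set.range (algebraMap K L))
    {P : K[X]} (hP : P ≠ 0) :
    finrank K (LinearMap.ker (aeval σ.toLinearMap P)) ≤ P.natDegree := by
  by_contra! hlt
  have hzero := coeff_eq_zero_of_forall_sum_eq_zero hfix
    (c := fun i => algebraMap K L (P.coeff i)) hlt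
    (fun x hx => (aeval_toLinearMap_apply P x).symm.trans hx) P.natDegree le_rfl
  exact hP (leadingCoeff_eq_zero.mp ((map_eq_zero _).mp hzero))

theorem finrank_ker_aeval_of_dvd [FiniteDimensional K L] (hσ : orderOf σ = finrank K L)
    {P : K[X]} (hP : P ∣ X ^ finrank K L - 1) :
    finrank K (LinearMap.ker (aeval σ.toLinearMap P)) = P.natDegree := by
  have hfix : ∀ x, σ x = x → x ∈ Set.range (algebraMap K L) :=
    fun _ => fixed_mem_range_algebraMap hσ
  obtain ⟨Q, hPQ⟩ := hP
  have hne : P * Q ≠ 0 := hPQ ▸ X_pow_sub_C_ne_zero finrank_pos 1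
  have hdeg : P.natDegree + Q.natDegree = finrank K L := by
    rw [← natDegree_mul (left_ne_zero_of_mul hne) (right_ne_zero_of_mul hne), ← hPQ]
    exact natDegree_X_pow_sub_C
  have hcomp : aeval σ.toLinearMap P ∘ₗ aeval σ.toLinearMap Q = 0 := by
    have hpow : σ.toLinearMap ^ finrank K L = 1 := by
      rw [← AlgEquiv.pow_toLinearMap, ← hσ, pow_orderOf_eq_one]
      rfl
    rw [← Module.End.mul_eq_comp, ← map_mul, ← hPQ]
    simp [hpow]
  have hrange : finrank K (LinearMap.range (aeval σ.toLinearMap Q)) ≤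
      finrank K (LinearMap.ker (aeval σ.toLinearMap P)) :=
    Submodule.finrank_mono (LinearMap.range_le_ker_iff.mpr hcomp)
  have hrankNullity := LinearMap.finrank_range_add_finrank_ker (aeval σ.toLinearMap Q)
  have hP_le := finrank_ker_aeval_le_natDegree hfix (left_ne_zero_of_mul hne)
  have hQ_le := finrank_ker_aeval_le_natDegree hfix (right_ne_zero_of_mul hne)
  lia

theorem exists_sum_mul_pow_apply_ne_zero (hσ : 0 < orderOf σ) {c : ℕ → L} (hc : c 0 ≠ 0) :
    ∃ t, ∑ i ∈ range (orderOf σ), c i * (σ ^ i) t ≠ 0 := by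
  by_contra! hsum
  have hinj : Function.Injective
      fun i : Fin (orderOf σ) => ((σ ^ (i : ℕ) : L ≃ₐ[K] L) : L →* L) := by
    intro i j hij
    exact Fin.ext (pow_injOn_Iio_orderOf i.2 j.2
      (AlgEquiv.ext fun x => DFunLike.congr_fun (F := L →* L) hij x))
  have hind := (linearIndependent_monoidHom L L).comp _ hinj
  refine hc (Fintype.linearIndependent_iff.mp hind (fun i => c i) ?_ ⟨0, hσ⟩)
  funext t
  simpa [Finset.sum_range] using hsum t

-- Hilbert 90; the version in Mathlib, `groupCohomology.exists_div_of_norm_eq_one`, is restricted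
-- to fields in `Type`.
theorem exists_mul_apply_eq_self_of_prod_eq_one (hσ : 0 < orderOf σ) {b : L}
    (hb : ∏ i ∈ range (orderOf σ), (σ ^ i) b = 1) : ∃ y, y ≠ 0 ∧ b * σ y = y := by
  let N : ℕ → L := fun k => ∏ i ∈ range k, (σ ^ i) b
  have hN_succ (k : ℕ) : b * σ (N k) = N (k + 1) := by
    simp only [N, prod_range_succ', map_prod, pow_succ', AlgEquiv.mul_apply, pow_zero,
      AlgEquiv.one_apply, mul_comm b]
  obtain ⟨t, ht⟩ := exists_sum_mul_pow_apply_ne_zero hσ (c := N) (by simp [N])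
  refine ⟨_, ht, ?_⟩
  have hshift : b * σ (∑ i ∈ range (orderOf σ), N i * (σ ^ i) t) =
      ∑ i ∈ range (orderOf σ), N (i + 1) * (σ ^ (i + 1)) t := by
    simp only [map_sum, mul_sum, map_mul, ← mul_assoc, hN_succ, pow_succ', AlgEquiv.mul_apply]
  have hends : N (orderOf σ) * (σ ^ orderOf σ) t = N 0 * (σ ^ 0) t := by
    simp only [N, hb, pow_orderOf_eq_one, prod_range_zero, pow_zero]
  rw [hshift]
  have h := sum_range_succ (fun i => N i * (σ ^ i) t) (orderOf σ)
  rw [sum_range_succ', hends] at h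
  exact add_right_cancel h

end CyclicExtension

section Remainder

variable {R : Type*} [CommRing R]

/-- The coefficients `(r₀, r₁, r₂, r₃)` of the remainder of `σ ^ k` under right division by
`σ ^ 4 - b σ - a` in the skew polynomial ring of `σ`, written in terms of the sequences of
conjugates `α i = σ ^ i a` and `β i = σ ^ i b`. -/
def remainder (α β : ℕ → R) : ℕ → Fin 4 → R
  | 0 => ![1, 0, 0, 0]
  | 1 => ![0, 1, 0, 0]
  | 2 => ![0, 0, 1, 0]
  | 3 => ![0, 0, 0, 1]
  | k + 4 => β k • remainder α β (k + 1) + α k • remainder α β k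

theorem sum_remainder_mul_eq {α β s : ℕ → R} (hs : ∀ k, s (k + 4) = β k * s (k + 1) + α k * s k)
    (k : ℕ) : ∑ i, remainder α β k i * s i = s k := by
  induction k using remainder.induct with
  | case5 k ih₁ ih₀ =>
    simp only [remainder, Pi.add_apply, Pi.smul_apply, smul_eq_mul, add_mul, mul_assoc,
      sum_add_distrib, ← mul_sum, ih₁, ih₀, hs]
  | _ => simp [remainder, Fin.sum_univ_four]

theorem map_remainder {S : Type*} [CommRing S] (f : R →+* S) (α β : ℕ → R) (k : ℕ) (i : Fin 4) :
    f (remainder α β k i) = remainder (f ∘ α) (f ∘ β) k i := by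
  induction k using remainder.induct with
  | case5 k ih₁ ih₀ => simp [remainder, ih₁, ih₀]
  | _ => fin_cases i <;> simp [remainder]

/-- The remainder of `σ ^ n` is `1`, as are its conjugates, which are obtained by shifting the
sequences `α` and `β`. -/
def RemainderEqOne (α β : ℕ → R) (n : ℕ) : Prop :=
  ∀ k, remainder (fun i => α (k + i)) (fun i => β (k + i)) n = ![1, 0, 0, 0]

end Remainder

section ScalingAction

variable {K L : Type*} [Field K] [Field L] [Algebra K L] {σ : L ≃ₐ[K] L} {a b a' b' : L}
  {c : L × L × L}

/-- The `σ`-trinomial `x ↦ c₀ x + c₁ σ(x) + c₄ σ⁴(x)` with coefficients `c = (c₀, c₁, c₄)`. -/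
def trinomialMap (σ : L ≃ₐ[K] L) (c : L × L × L) : L →ₗ[K] L :=
  LinearMap.mulLeft K c.1 + LinearMap.mulLeft K c.2.1 ∘ₗ σ.toLinearMap
    + LinearMap.mulLeft K c.2.2 ∘ₗ (σ ^ 4 : L ≃ₐ[K] L).toLinearMap

theorem trinomialMap_apply (c : L × L × L) (x : L) :
    trinomialMap σ c x = c.1 * x + c.2.1 * σ x + c.2.2 * (σ ^ 4) x := rfl

/-- The coefficient triples whose trinomial has a kernel of the largest dimension, `4`, allowed by
its `σ`-degree. -/
def fullTriples (σ : L ≃ₐ[K] L) : Set (L × L × L) :=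
  {c | finrank K (LinearMap.ker (trinomialMap σ c)) = 4}

theorem weightCount4_eq_card_fullTriples : weightCount4 K L σ = Nat.card (fullTriples σ) := rfl

/-- The group of pairs `(μ, ν)` of nonzero scalars, acting on coefficient triples by
`f(x) ↦ μ f(ν x)`. It is a type synonym, indexed by `σ`, because the action depends on `σ`. -/
def ScalingGroup (_σ : L ≃ₐ[K] L) : Type _ := Lˣ × Lˣ

instance : Group (ScalingGroup σ) := inferInstanceAs (Group (Lˣ × Lˣ))

instance : SMul (ScalingGroup σ) (L × L × L) where
  smul g c := (g.1 * g.2 * c.1, g.1 * σ g.2 * c.2.1, g.1 * (σ ^ 4) g.2 * c.2.2)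

theorem scaling_smul_def (g : ScalingGroup σ) (c : L × L × L) :
    g • c = (g.1 * g.2 * c.1, g.1 * σ g.2 * c.2.1, g.1 * (σ ^ 4) g.2 * c.2.2) := rfl

instance : MulAction (ScalingGroup σ) (L × L × L) where
  one_smul c := by
    have hfst : (1 : ScalingGroup σ).1 = 1 := rfl
    have hsnd : (1 : ScalingGroup σ).2 = 1 := rfl
    simp only [scaling_smul_def, hfst, hsnd, Units.val_one, map_one, one_mul]
  mul_smul g h c := by
    have hfst : (g * h).1 = g.1 * h.1 := rfl
    have hsnd : (g * h).2 = g.2 * h.2 := rfl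
    simp only [scaling_smul_def, hfst, hsnd, Units.val_mul, map_mul, Prod.mk.injEq]
    refine ⟨?_, ?_, ?_⟩ <;> ring

theorem mem_scalingOrbit_iff {t : L × L × L} :
    c ∈ MulAction.orbit (ScalingGroup σ) t ↔
      ∃ μ ν : Lˣ, (μ * ν * t.1, μ * σ ν * t.2.1, μ * (σ ^ 4) ν * t.2.2) = c :=
  Prod.exists

/-- The coefficients of the monic trinomial `σ⁴ - b σ - a`; the signs make `a` and `b` the
coefficients of the recurrence satisfied on its kernel. -/
def monicTriple (a b : L) : L × L × L := (-a, -b, 1)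

theorem trinomialMap_smul_apply (g : ScalingGroup σ) (c : L × L × L) (x : L) :
    trinomialMap σ (g • c) x = g.1 * trinomialMap σ c (g.2 * x) := by
  simp only [trinomialMap_apply, scaling_smul_def, map_mul]
  ring

theorem smul_mem_fullTriples_iff (g : ScalingGroup σ) :
    g • c ∈ fullTriples σ ↔ c ∈ fullTriples σ := by
  let e : L ≃ₗ[K] L := DistribMulAction.toLinearEquiv K L g.2
  have hker : (LinearMap.ker (trinomialMap σ (g • c))).map (e : L →ₗ[K] L) =
      LinearMap.ker (trinomialMap σ c) := by
    rw [Submodule.map_equiv_eq_comap_symm]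
    ext x
    have hx : (g.2 : L) * e.symm x = x := e.apply_symm_apply x
    simp [trinomialMap_smul_apply, hx]
  rw [fullTriples, Set.mem_ofPred_eq, Set.mem_ofPred_eq, ← hker, e.finrank_map_eq]

theorem mem_fullTriples_of_mem_orbit {t : L × L × L} (ht : t ∈ fullTriples σ)
    (hc : c ∈ MulAction.orbit (ScalingGroup σ) t) : c ∈ fullTriples σ := by
  obtain ⟨g, rfl⟩ := hc
  exact (smul_mem_fullTriples_iff g).mpr ht

theorem monic_mem_orbit_of_twist {y : L} (hy : y ≠ 0) (ha : a * (σ ^ 4) y = a' * y)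
    (hb : b * (σ ^ 4) y = b' * σ y) :
    monicTriple a b ∈ MulAction.orbit (ScalingGroup σ) (monicTriple a' b') := by
  have hσy : (σ ^ 4) y ≠ 0 := (_root_.map_ne_zero _).mpr hy
  refine mem_scalingOrbit_iff.mpr ⟨(Units.mk0 _ hσy)⁻¹, Units.mk0 y hy, ?_⟩
  simp only [monicTriple, Units.val_inv_eq_inv_val, Units.val_mk0, Prod.mk.injEq]
  refine ⟨?_, ?_, ?_⟩ <;> field_simp
  · linear_combination ha
  · linear_combination hb

theorem monicTriple_mem_fullTriples_of_dvd [FiniteDimensional K L] (hσ : orderOf σ = finrank K L)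
    {a b : K} (hdvd : X ^ 4 - C b * X - C a ∣ X ^ finrank K L - 1) :
    monicTriple (algebraMap K L a) (algebraMap K L b) ∈ fullTriples σ := by
  have haeval : trinomialMap σ (monicTriple (algebraMap K L a) (algebraMap K L b)) =
      aeval σ.toLinearMap (X ^ 4 - C b * X - C a) := by
    ext x
    simp only [monicTriple, trinomialMap_apply, aeval_sub, map_pow, map_mul, aeval_X, aeval_C,
      ← AlgEquiv.pow_toLinearMap, LinearMap.sub_apply, AlgEquiv.toLinearMap_apply, End.mul_apply,
      algebraMap_end_apply, Algebra.smul_def]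
    ring
  rw [fullTriples, Set.mem_ofPred_eq, haeval, finrank_ker_aeval_of_dvd hσ hdvd]
  compute_degree!

theorem leading_ne_zero_of_mem_fullTriples [FiniteDimensional K L] (hσ : orderOf σ = finrank K L)
    (hn : 4 < finrank K L) (hc : c ∈ fullTriples σ) : c.2.2 ≠ 0 := by
  intro hzero
  have hvanish := coeff_eq_zero_of_forall_sum_eq_zero
    (fun _ => fixed_mem_range_algebraMap hσ) (m := 1) (V := LinearMap.ker (trinomialMap σ c))
    (c := fun i => if i = 0 then c.1 else c.2.1) (by rw [hc]; norm_num) (fun x hx => by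
      simpa [sum_range_succ, trinomialMap_apply, hzero] using hx)
  have hc_zero : c = 0 := by
    ext
    exacts [hvanish 0 (by norm_num), hvanish 1 le_rfl, hzero]
  have hmap_zero : trinomialMap σ c = 0 := by
    ext x
    simp [trinomialMap_apply, hc_zero]
  rw [fullTriples, Set.mem_ofPred_eq, hmap_zero, LinearMap.ker_zero, finrank_top] at hc
  lia

theorem exists_monic_of_mem_fullTriples [FiniteDimensional K L] (hσ : orderOf σ = finrank K L)
    (hn : 4 < finrank K L) (hc : c ∈ fullTriples σ) :
    ∃ a b, monicTriple a b ∈ fullTriples σ ∧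
      c ∈ MulAction.orbit (ScalingGroup σ) (monicTriple a b) := by
  have hlead := leading_ne_zero_of_mem_fullTriples hσ hn hc
  have horbit : c ∈ MulAction.orbit (ScalingGroup σ)
      (monicTriple (-c.1 / c.2.2) (-c.2.1 / c.2.2)) := by
    refine mem_scalingOrbit_iff.mpr ⟨Units.mk0 _ hlead, 1, ?_⟩
    simp only [monicTriple, Units.val_mk0, Units.val_one, map_one]
    ext <;> field_simp
  exact ⟨_, _, mem_fullTriples_of_mem_orbit hc (MulAction.mem_orbit_symm.mp horbit), horbit⟩

theorem pow_add_four_apply_of_mem_ker {x : L}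
    (hx : x ∈ LinearMap.ker (trinomialMap σ (monicTriple a b))) (k : ℕ) :
    (σ ^ (k + 4)) x = (σ ^ k) b * (σ ^ (k + 1)) x + (σ ^ k) a * (σ ^ k) x := by
  have hx' : -a * x + -b * σ x + 1 * (σ ^ 4) x = 0 := hx
  rw [pow_add, pow_succ σ k, AlgEquiv.mul_apply, AlgEquiv.mul_apply, ← map_mul, ← map_mul,
    ← map_add]
  congr 1
  linear_combination hx'

theorem remainder_finrank_of_mem_fullTriples [FiniteDimensional K L]
    (hσ : orderOf σ = finrank K L) (hab : monicTriple a b ∈ fullTriples σ) :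
    remainder (fun i => (σ ^ i) a) (fun i => (σ ^ i) b) (finrank K L) = ![1, 0, 0, 0] := by
  set r := remainder (fun i => (σ ^ i) a) (fun i => (σ ^ i) b) (finrank K L) with hr
  have hcoeff := coeff_eq_zero_of_forall_sum_eq_zero (fun _ => fixed_mem_range_algebraMap hσ)
    (m := 3) (V := LinearMap.ker (trinomialMap σ (monicTriple a b)))
    (c := fun i => r (Fin.ofNat 4 i) - (![1, 0, 0, 0] : Fin 4 → L) (Fin.ofNat 4 i))
    (by rw [hab]; norm_num) (fun x hx => by
      have h := sum_remainder_mul_eq (s := fun k => (σ ^ k) x)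
        (pow_add_four_apply_of_mem_ker hx) (finrank K L)
      simp only [← hr] at h
      rw [← hσ, pow_orderOf_eq_one, AlgEquiv.one_apply] at h
      simp only [sum_range, Fin.ofNat_val_eq_self, sub_mul, sum_sub_distrib, h]
      simp [Fin.sum_univ_four])
  funext i
  simpa [sub_eq_zero] using hcoeff i (by lia)

theorem remainderEqOne_of_mem_fullTriples [FiniteDimensional K L] (hσ : orderOf σ = finrank K L)
    (hab : monicTriple a b ∈ fullTriples σ) :
    RemainderEqOne (fun i => (σ ^ i) a) (fun i => (σ ^ i) b) (finrank K L) := by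
  intro k
  funext i
  have hconj (x : L) : (fun i => (σ ^ (k + i)) x) = (σ ^ k : L ≃ₐ[K] L) ∘ fun i => (σ ^ i) x := by
    funext i
    rw [Function.comp_apply, pow_add, AlgEquiv.mul_apply]
  have h := map_remainder ((σ ^ k : L ≃ₐ[K] L) : L →+* L) (fun i => (σ ^ i) a)
    (fun i => (σ ^ i) b) (finrank K L) i
  rw [remainder_finrank_of_mem_fullTriples hσ hab] at h
  simp only [hconj]
  refine h.symm.trans ?_
  fin_cases i <;> simp

end ScalingAction

section RemainderIdentities

variable {R : Type*} [CommRing R] {α β : ℕ → R} {n : ℕ}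

theorem remainder_succ_apply_zero (hα : α 0 = 0) (k : ℕ) : remainder α β (k + 1) 0 = 0 := by
  induction k using Nat.strong_induction_on with
  | _ k ih =>
    match k with
    | 0 | 1 | 2 => rfl
    | 3 => simp [remainder, hα]
    | k + 4 => simp [remainder, ih (k + 1) (by lia), ih k (by lia)]

theorem RemainderEqOne.prod_eq_one (h : RemainderEqOne α β n) (hn : n = 8 ∨ n = 12) :
    ∏ i ∈ range (n / 4), α (4 * i) = 1 := by
  rcases hn with rfl | rfl <;>
    simpa [remainder, prod_range_succ, mul_comm, mul_left_comm] using congrFun (h 0) 0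

theorem remainder_thirteen_zero (α β : ℕ → R) :
    remainder α β 13 0 = α 0 * β 3 * β 6 * β 9 := by
  simp only [remainder, Pi.add_apply, Pi.smul_apply, smul_eq_mul, Matrix.cons_val]
  ring

theorem remainder_thirteen_one (α β : ℕ → R) :
    remainder α β 13 1 = α 1 * α 5 * α 9 + β 0 * β 3 * β 6 * β 9 := by
  simp only [remainder, Pi.add_apply, Pi.smul_apply, smul_eq_mul, Matrix.cons_val]
  ring

theorem remainder_thirteen_three (α β : ℕ → R) :
    remainder α β 13 3 = α 3 * β 6 * β 9 + β 2 * α 6 * β 9 + β 2 * β 5 * α 9 := by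
  simp only [remainder, Pi.add_apply, Pi.smul_apply, smul_eq_mul, Matrix.cons_val]
  ring

theorem RemainderEqOne.const_thirteen (h : RemainderEqOne α β 13) (k : ℕ) :
    α k * β (k + 3) * β (k + 6) * β (k + 9) = 1 := by
  simpa [remainder_thirteen_zero] using congrFun (h k) 0

theorem RemainderEqOne.three_eq_zero (h : RemainderEqOne α β 13) (hβ : ∀ k, β (k + 13) = β k) :
    (3 : R) = 0 := by
  have hcubic : α 3 * β 6 * β 9 + β 2 * α 6 * β 9 + β 2 * β 5 * α 9 = 0 := by
    simpa [remainder_thirteen_three] using congrFun (h 0) 3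
  have h₃ := h.const_thirteen 3
  have h₆ := h.const_thirteen 6
  have h₉ := h.const_thirteen 9
  simp only [Nat.reduceAdd, hβ 2, hβ 5] at h₃ h₆ h₉
  linear_combination β 12 * hcubic - h₃ - h₆ - h₉

theorem RemainderEqOne.prod_neg_thirteen (h : RemainderEqOne α β 13)
    (hβ : ∀ k, β (k + 13) = β k) : ∏ i ∈ range 13, -β (3 * i) = 1 := by
  have hlinear : α 1 * α 5 * α 9 + β 0 * β 3 * β 6 * β 9 = 0 := by
    simpa [remainder_thirteen_one] using congrFun (h 0) 1
  have h₁ := h.const_thirteen 1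
  have h₅ := h.const_thirteen 5
  have h₉ := h.const_thirteen 9
  simp only [Nat.reduceAdd, hβ 1, hβ 2, hβ 5] at h₁ h₅ h₉
  have hprod : (α 1 * β 4 * β 7 * β 10) * (α 5 * β 8 * β 11 * β 1) *
      (α 9 * β 12 * β 2 * β 5) = 1 := by
    rw [h₁, h₅, h₉]
    ring
  simp only [prod_range_succ, prod_range_zero, Nat.reduceMul, hβ 2, hβ 5, hβ 8, hβ 11, hβ 14, hβ 1,
    hβ 17, hβ 4, hβ 20, hβ 7, hβ 23, hβ 10]
  linear_combination hprod -
    β 4 * β 7 * β 10 * β 8 * β 11 * β 1 * β 12 * β 2 * β 5 * hlinear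

theorem remainder_fifteen_zero (α β : ℕ → R) :
    remainder α β 15 0 =
      α 0 * α 4 * α 8 * β 11 + α 0 * α 4 * β 7 * α 11 + α 0 * β 3 * α 7 * α 11 := by
  simp only [remainder, Pi.add_apply, Pi.smul_apply, smul_eq_mul, Matrix.cons_val]
  ring

theorem remainder_fifteen_two (α β : ℕ → R) :
    remainder α β 15 2 =
      α 2 * β 5 * β 8 * β 11 + β 1 * α 5 * β 8 * β 11 + β 1 * β 4 * α 8 * β 11 +
        β 1 * β 4 * β 7 * α 11 := by
  simp only [remainder, Pi.add_apply, Pi.smul_apply, smul_eq_mul, Matrix.cons_val]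
  ring

theorem remainder_fifteen_three (α β : ℕ → R) :
    remainder α β 15 3 = α 3 * α 7 * α 11 + β 2 * β 5 * β 8 * β 11 := by
  simp only [remainder, Pi.add_apply, Pi.smul_apply, smul_eq_mul, Matrix.cons_val]
  ring

theorem RemainderEqOne.cubic_fifteen (h : RemainderEqOne α β 15) (k : ℕ) :
    α (k + 3) * α (k + 7) * α (k + 11) + β (k + 2) * β (k + 5) * β (k + 8) * β (k + 11) = 0 := by
  simpa [remainder_fifteen_three] using congrFun (h k) 3

theorem RemainderEqOne.ratio_fifteen (h : RemainderEqOne α β 15) (hα : ∀ k, α (k + 15) = α k)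
    (hβ : ∀ k, β (k + 15) = β k) (k : ℕ) :
    α (k + 3) * β k * β (k + 6) * β (k + 9) * β (k + 12) =
      α k * β (k + 2) * β (k + 5) * β (k + 8) * β (k + 11) := by
  have h₀ := h.cubic_fifteen k
  have h₄ := h.cubic_fifteen (k + 4)
  simp only [add_assoc, Nat.reduceAdd, hα k, hβ k] at h₄
  linear_combination α (k + 3) * h₄ - α k * h₀

/-- The product of `β` along the progression `k, k + 3, …, k + 12`. For the conjugates of `b` under
an automorphism `σ` of order `15` it is `σ ^ k` of the norm of `b` to the fixed field of `σ ^ 3`. -/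
def stepThreeProd (β : ℕ → R) (k : ℕ) : R :=
  β k * β (k + 3) * β (k + 6) * β (k + 9) * β (k + 12)

theorem RemainderEqOne.sum_stepThreeProd (h : RemainderEqOne α β 15)
    (hα : ∀ k, α (k + 15) = α k) (hβ : ∀ k, β (k + 15) = β k) :
    stepThreeProd β 0 + stepThreeProd β 1 + stepThreeProd β 2 = -1 := by
  have hconst : α 0 * α 4 * α 8 * β 11 + α 0 * α 4 * β 7 * α 11 + α 0 * β 3 * α 7 * α 11 = 1 := by
    simpa [remainder_fifteen_zero] using congrFun (h 0) 0
  have h₄ := h.cubic_fifteen 4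
  have h₈ := h.cubic_fifteen 8
  have h₁₂ := h.cubic_fifteen 12
  simp only [Nat.reduceAdd, hα 0, hα 4, hα 8, hβ 0, hβ 1, hβ 2, hβ 4, hβ 5, hβ 8] at h₄ h₈ h₁₂
  simp only [stepThreeProd, Nat.reduceAdd]
  linear_combination -hconst + β 11 * h₁₂ + β 7 * h₈ + β 3 * h₄

theorem RemainderEqOne.ne_zero [Nontrivial R] (h : RemainderEqOne α β n) (hn : n ≠ 0)
    (k : ℕ) : α k ≠ 0 := by
  obtain ⟨m, rfl⟩ := Nat.exists_eq_succ_of_ne_zero hn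
  intro hk
  have hconst := congrFun (h k) 0
  rw [remainder_succ_apply_zero hk] at hconst
  exact zero_ne_one hconst

variable [IsDomain R]

theorem not_remainderEqOne (hn : 5 ≤ n) (hn' : n ≤ 11) (hn8 : n ≠ 8) :
    ¬ RemainderEqOne α β n := by
  intro h
  have hα := h.ne_zero (by lia)
  interval_cases n
  · simpa [remainder] using congrFun (h 0) 0
  · simpa [remainder] using congrFun (h 0) 0
  · simpa [remainder, hα] using congrFun (h 0) 3
  · exact hn8 rfl
  · simpa [remainder] using congrFun (h 0) 0
  · simpa [remainder, hα] using congrFun (h 0) 2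
  · simpa [remainder, hα] using congrFun (h 0) 3

theorem RemainderEqOne.exists_eq_zero (h : RemainderEqOne α β n) (hn : n = 8 ∨ n = 12) :
    ∃ k, β k = 0 := by
  rcases hn with rfl | rfl
  · have hcoeff : β 4 = 0 ∨ β 1 = 0 := by simpa [remainder] using congrFun (h 0) 2
    exact hcoeff.elim (⟨_, ·⟩) (⟨_, ·⟩)
  · have hcoeff : β 8 = 0 ∨ β 5 = 0 ∨ β 2 = 0 := by simpa [remainder] using congrFun (h 0) 3
    rcases hcoeff with hk | hk | hk <;> exact ⟨_, hk⟩

theorem RemainderEqOne.ne_zero_fifteen (h : RemainderEqOne α β 15)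
    (hβ : ∀ k, β (k + 15) = β k) (k : ℕ) : β k ≠ 0 := by
  intro hk
  have hcubic := h.cubic_fifteen (k + 13)
  rw [add_assoc k, hβ, hk] at hcubic
  simp [h.ne_zero] at hcubic

theorem RemainderEqOne.stepThreeProd_relation (h : RemainderEqOne α β 15)
    (hα : ∀ k, α (k + 15) = α k) (hβ : ∀ k, β (k + 15) = β k) :
    (stepThreeProd β 0 + stepThreeProd β 2) *
      (stepThreeProd β 0 ^ 2 + stepThreeProd β 2 ^ 2) = 0 := by
  have hα_ne := h.ne_zero (by norm_num)
  have hβ_ne := h.ne_zero_fifteen hβ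
  set u := stepThreeProd β 0 with hu
  set w := stepThreeProd β 2 with hw
  -- The four terms of the quadratic coefficient form a geometric progression with ratio `w / u`.
  set T₁ := α 3 * β 6 * β 9 * β 12 with hT₁
  set T₂ := β 2 * α 6 * β 9 * β 12
  set T₃ := β 2 * β 5 * α 9 * β 12
  set T₄ := β 2 * β 5 * β 8 * α 12
  have hsum : T₁ + T₂ + T₃ + T₄ = 0 := by
    simpa [remainder_fifteen_two] using congrFun (h 1) 2
  have h₃ := h.ratio_fifteen hα hβ 3
  have h₆ := h.ratio_fifteen hα hβ 6
  have h₉ := h.ratio_fifteen hα hβ 9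
  simp only [Nat.reduceAdd, hβ 0, hβ 2, hβ 3, hβ 5, hβ 6] at h₃ h₆ h₉
  have hratio₁ : u * T₂ = w * T₁ := by
    simp only [hu, hw, stepThreeProd, Nat.reduceAdd, zero_add]
    linear_combination β 6 * β 9 * β 12 * β 2 * h₃
  have hratio₂ : u * T₃ = w * T₂ := by
    simp only [hu, hw, stepThreeProd, Nat.reduceAdd, zero_add]
    linear_combination β 9 * β 2 * β 5 * β 12 * h₆
  have hratio₃ : u * T₄ = w * T₃ := by
    simp only [hu, hw, stepThreeProd, Nat.reduceAdd, zero_add]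
    linear_combination β 12 * β 2 * β 5 * β 8 * h₉
  have hT₁_ne : T₁ ≠ 0 := by simp [hT₁, hα_ne, hβ_ne]
  refine (mul_eq_zero.mp ?_).resolve_left hT₁_ne
  linear_combination u ^ 3 * hsum - (u ^ 2 + u * w + w ^ 2) * hratio₁
    - (u ^ 2 + u * w) * hratio₂ - u ^ 2 * hratio₃

theorem RemainderEqOne.add_three_of_const_neg_one (h : RemainderEqOne α (fun _ => -1) 15)
    (hα : ∀ k, α (k + 15) = α k) (k : ℕ) : α (k + 3) = α k := by
  have h₀ := h.cubic_fifteen k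
  have h₄ := h.cubic_fifteen (k + 4)
  simp only [add_assoc, Nat.reduceAdd, hα k] at h₄
  refine mul_right_cancel₀ (mul_ne_zero (h.ne_zero (by norm_num) (k + 7))
    (h.ne_zero (by norm_num) (k + 11))) ?_
  linear_combination h₀ - h₄

theorem two_eq_zero_and_eq_one_of_conjugates (σ : R →+* R) {u : R} (hu : u ≠ 0)
    (hperiod : σ (σ (σ u)) = u) (hrel : (u + σ (σ u)) * (u ^ 2 + σ (σ u) ^ 2) = 0)
    (htrace : u + σ u + σ (σ u) = -1) : (2 : R) = 0 ∧ u = 1 := by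
  set w := σ (σ u) with hw
  have htwo : (2 : R) = 0 := by
    rcases mul_eq_zero.mp hrel with h | h
    · have h' := congrArg σ h
      have h'' := congrArg σ h'
      simp only [map_add, map_zero, hperiod, ← hw] at h' h''
      refine (mul_eq_zero.mp ?_).resolve_right hu
      linear_combination h + h' - h''
    · have h' := congrArg σ h
      have h'' := congrArg σ h'
      simp only [map_add, map_pow, map_zero, hperiod, ← hw] at h' h''
      refine (mul_eq_zero.mp ?_).resolve_right (pow_ne_zero 2 hu)
      linear_combination h + h' - h''
  have huw : u + w = 0 := by
    refine eq_zero_of_pow_eq_zero (n := 3) ?_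
    linear_combination hrel + (u ^ 2 * w + u * w ^ 2) * htwo
  have huv : σ u + u = 0 := by simpa [hperiod] using congrArg σ huw
  exact ⟨htwo, by linear_combination -huw - huv + htrace + (u - 1) * htwo⟩

end RemainderIdentities

section Classification

variable {K L : Type*} [Field K] [Field L] [Algebra K L] {σ : L ≃ₐ[K] L} {a b : L}

theorem pow_add_apply_of_orderOf_eq {n : ℕ} (hσ : orderOf σ = n) (x : L) (k : ℕ) :
    (σ ^ (k + n)) x = (σ ^ k) x := by
  rw [pow_add, ← hσ, pow_orderOf_eq_one, mul_one]

theorem exists_mem_orbit_monicTriple_neg_one (hσ : 0 < orderOf (σ ^ 3))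
    (hb : ∏ i ∈ range (orderOf (σ ^ 3)), (σ ^ (3 * i)) (-b) = 1) :
    ∃ a', monicTriple a b ∈ MulAction.orbit (ScalingGroup σ) (monicTriple a' (-1)) := by
  simp only [pow_mul] at hb
  obtain ⟨z, hz, hbz⟩ := exists_mul_apply_eq_self_of_prod_eq_one hσ hb
  obtain ⟨y, rfl⟩ := σ.surjective z
  have hy : y ≠ 0 := (_root_.map_ne_zero σ).mp hz
  refine ⟨a * (σ ^ 4) y / y, monic_mem_orbit_of_twist hy (by field_simp) ?_⟩
  rw [pow_succ, AlgEquiv.mul_apply]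
  linear_combination -hbz

theorem map_stepThreeProd_orbit (b : L) (k : ℕ) :
    σ (stepThreeProd (fun i => (σ ^ i) b) k) = stepThreeProd (fun i => (σ ^ i) b) (k + 1) := by
  simp only [stepThreeProd, map_mul, ← AlgEquiv.mul_apply, ← pow_succ', add_right_comm]

variable [FiniteDimensional K L]

theorem fullTriples_eq_empty (hσ : orderOf σ = finrank K L) (hn : 4 < finrank K L)
    (h : ∀ a b, monicTriple a b ∉ fullTriples σ) : fullTriples σ = ∅ := by
  refine Set.eq_empty_of_forall_notMem fun c hc => ?_
  obtain ⟨a, b, hab, -⟩ := exists_monic_of_mem_fullTriples hσ hn hc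
  exact h a b hab

theorem fullTriples_eq_orbit (hσ : orderOf σ = finrank K L) (hn : 4 < finrank K L)
    {t : L × L × L} (ht : t ∈ fullTriples σ)
    (h : ∀ a b, monicTriple a b ∈ fullTriples σ →
      monicTriple a b ∈ MulAction.orbit (ScalingGroup σ) t) :
    fullTriples σ = MulAction.orbit (ScalingGroup σ) t := by
  refine Set.Subset.antisymm (fun c hc => ?_) fun c => mem_fullTriples_of_mem_orbit ht
  obtain ⟨a, b, hab, hcab⟩ := exists_monic_of_mem_fullTriples hσ hn hc
  rwa [MulAction.orbit_eq_iff.mpr (h a b hab)] at hcab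

theorem fullTriples_eq_empty_of_le_eleven (hσ : orderOf σ = finrank K L) (h5 : 5 ≤ finrank K L)
    (h11 : finrank K L ≤ 11) (h8 : finrank K L ≠ 8) : fullTriples σ = ∅ :=
  fullTriples_eq_empty hσ h5 fun _ _ hab =>
    not_remainderEqOne h5 h11 h8 (remainderEqOne_of_mem_fullTriples hσ hab)

theorem mem_orbit_of_finrank_eight_or_twelve (hσ : orderOf σ = finrank K L)
    (hn : finrank K L = 8 ∨ finrank K L = 12) (hab : monicTriple a b ∈ fullTriples σ) :
    monicTriple a b ∈ MulAction.orbit (ScalingGroup σ) (monicTriple 1 0) := by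
  have hrem := remainderEqOne_of_mem_fullTriples hσ hab
  obtain ⟨k, hk⟩ := hrem.exists_eq_zero hn
  have hb : b = 0 := (_root_.map_eq_zero _).mp hk
  have horder : orderOf (σ ^ 4) = finrank K L / 4 := by
    rw [orderOf_pow_of_dvd four_ne_zero (by lia), hσ]
  have hprod := hrem.prod_eq_one hn
  simp only [pow_mul, ← horder] at hprod
  obtain ⟨y, hy, hay⟩ := exists_mul_apply_eq_self_of_prod_eq_one (by lia) hprod
  exact monic_mem_orbit_of_twist hy (by rw [hay, one_mul]) (by rw [hb, zero_mul, zero_mul])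

theorem fullTriples_eq_orbit_of_finrank_eight_or_twelve (hσ : orderOf σ = finrank K L)
    (hn : finrank K L = 8 ∨ finrank K L = 12) :
    fullTriples σ = MulAction.orbit (ScalingGroup σ) (monicTriple 1 0) := by
  refine fullTriples_eq_orbit hσ (by lia) ?_ fun a b =>
    mem_orbit_of_finrank_eight_or_twelve hσ hn
  have hdvd : (X ^ 4 - C 0 * X - C 1 : K[X]) ∣ X ^ finrank K L - 1 := by
    obtain ⟨m, hm⟩ : 4 ∣ finrank K L := by lia
    simpa [hm, pow_mul] using sub_one_dvd_pow_sub_one (X ^ 4 : K[X]) m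
  simpa using monicTriple_mem_fullTriples_of_dvd hσ hdvd

theorem three_eq_zero_of_mem_fullTriples (hσ : orderOf σ = finrank K L) (hn : finrank K L = 13)
    (hab : monicTriple a b ∈ fullTriples σ) : (3 : L) = 0 := by
  have hrem := remainderEqOne_of_mem_fullTriples hσ hab
  rw [hn] at hrem hσ
  exact hrem.three_eq_zero (pow_add_apply_of_orderOf_eq hσ b)

theorem fullTriples_eq_empty_of_finrank_eq_thirteen (hσ : orderOf σ = finrank K L)
    (hn : finrank K L = 13) (h3 : (3 : K) ≠ 0) : fullTriples σ = ∅ := by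
  refine fullTriples_eq_empty hσ (by lia) fun a b hab => h3 ((algebraMap K L).injective ?_)
  rw [map_ofNat, map_zero, three_eq_zero_of_mem_fullTriples hσ hn hab]

theorem mem_orbit_of_finrank_eq_thirteen (hσ : orderOf σ = finrank K L) (hn : finrank K L = 13)
    (hab : monicTriple a b ∈ fullTriples σ) :
    monicTriple a b ∈ MulAction.orbit (ScalingGroup σ) (monicTriple (-1) (-1)) := by
  have hrem := remainderEqOne_of_mem_fullTriples hσ hab
  have horder : orderOf (σ ^ 3) = 13 := by
    rw [Nat.Coprime.orderOf_pow (by rw [hσ, hn]; norm_num), hσ, hn]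
  have hprod : ∏ i ∈ range (orderOf (σ ^ 3)), (σ ^ (3 * i)) (-b) = 1 := by
    rw [hn] at hrem hσ
    simpa only [horder, map_neg] using hrem.prod_neg_thirteen (pow_add_apply_of_orderOf_eq hσ b)
  obtain ⟨a', horbit⟩ := exists_mem_orbit_monicTriple_neg_one (a := a) (by lia) hprod
  have hrem' := remainderEqOne_of_mem_fullTriples hσ
    (mem_fullTriples_of_mem_orbit hab (MulAction.mem_orbit_symm.mp horbit))
  have ha' : a' = -1 := by
    rw [hn] at hrem'
    have h := hrem'.const_thirteen 0
    simp only [pow_zero, AlgEquiv.one_apply, map_neg, map_one] at h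
    linear_combination -h
  rwa [ha'] at horbit

theorem fullTriples_eq_orbit_of_finrank_eq_thirteen (hσ : orderOf σ = finrank K L)
    (hn : finrank K L = 13) (h3 : (3 : K) = 0) :
    fullTriples σ = MulAction.orbit (ScalingGroup σ) (monicTriple (-1) (-1)) := by
  refine fullTriples_eq_orbit hσ (by lia) ?_ fun a b => mem_orbit_of_finrank_eq_thirteen hσ hn
  have hdvd : (X ^ 4 - C (-1) * X - C (-1) : K[X]) ∣ X ^ finrank K L - 1 := by
    refine ⟨X ^ 9 - X ^ 6 - X ^ 5 + X ^ 3 - X ^ 2 + X - 1, ?_⟩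
    have h3X : (3 : K[X]) = 0 := by rw [← C_ofNat, h3, C_0]
    rw [hn, C_neg, C_1]
    linear_combination X ^ 6 * h3X
  simpa using monicTriple_mem_fullTriples_of_dvd hσ hdvd

theorem two_eq_zero_and_stepThreeProd_eq_one (hσ : orderOf σ = finrank K L)
    (hn : finrank K L = 15) (hab : monicTriple a b ∈ fullTriples σ) :
    (2 : L) = 0 ∧ stepThreeProd (fun i => (σ ^ i) b) 0 = 1 := by
  have hrem := remainderEqOne_of_mem_fullTriples hσ hab
  rw [hn] at hrem hσ
  have hα := pow_add_apply_of_orderOf_eq hσ a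
  have hβ := pow_add_apply_of_orderOf_eq hσ b
  have hne := hrem.ne_zero_fifteen hβ
  refine two_eq_zero_and_eq_one_of_conjugates (σ : L →+* L) ?_ ?_ ?_ ?_
  · simp only [stepThreeProd, ne_eq, mul_eq_zero, hne, or_self, not_false_eq_true]
  · change σ (σ (σ _)) = _
    rw [map_stepThreeProd_orbit, map_stepThreeProd_orbit, map_stepThreeProd_orbit]
    simp only [stepThreeProd, Nat.reduceAdd, zero_add, hβ 0]
    ring
  · change (_ + σ (σ _)) * (_ + σ (σ _) ^ 2) = 0
    simp only [map_stepThreeProd_orbit]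
    exact hrem.stepThreeProd_relation hα hβ
  · change _ + σ _ + σ (σ _) = -1
    simp only [map_stepThreeProd_orbit]
    exact hrem.sum_stepThreeProd hα hβ

theorem fullTriples_eq_empty_of_finrank_eq_fifteen (hσ : orderOf σ = finrank K L)
    (hn : finrank K L = 15) (h2 : (2 : K) ≠ 0) : fullTriples σ = ∅ := by
  refine fullTriples_eq_empty hσ (by lia) fun a b hab => h2 ((algebraMap K L).injective ?_)
  rw [map_ofNat, map_zero, (two_eq_zero_and_stepThreeProd_eq_one hσ hn hab).1]

theorem mem_orbit_of_finrank_eq_fifteen_of_neg_one (hσ : orderOf σ = finrank K L)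
    (hn : finrank K L = 15) (hab : monicTriple a (-1) ∈ fullTriples σ) :
    monicTriple a (-1) ∈ MulAction.orbit (ScalingGroup σ) (monicTriple (-1) (-1)) := by
  have hrem := remainderEqOne_of_mem_fullTriples hσ hab
  rw [hn] at hrem hσ
  simp only [map_neg, map_one] at hrem
  have hper := hrem.add_three_of_const_neg_one (pow_add_apply_of_orderOf_eq hσ a)
  have hnorm : (-a) * (-σ a) * (-(σ ^ 2) a) = 1 := by
    have h := hrem.cubic_fifteen 0
    simp only [zero_add, hper 0, hper 4, hper 1, hper 8, hper 5, hper 2, pow_zero, pow_one,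
      AlgEquiv.one_apply] at h
    linear_combination -h
  obtain ⟨z, hz, haz⟩ := exists_mul_apply_eq_self_of_prod_eq_one (σ := σ) (b := -a) (by lia) (by
    calc ∏ i ∈ range (orderOf σ), (σ ^ i) (-a)
        = ((-a) * (-σ a) * (-(σ ^ 2) a)) ^ 5 := by
          simp only [hσ, prod_range_succ, prod_range_zero, map_neg, hper 0, hper 1, hper 2,
            hper 3, hper 4, hper 5, hper 6, hper 7, hper 8, hper 9, hper 10, hper 11, pow_zero,
            pow_one, AlgEquiv.one_apply]
          ring
      _ = 1 := by rw [hnorm, one_pow])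
  have hz3 : (σ ^ 3) z = z := by
    have haz1 : -σ a * (σ ^ 2) z = σ z := by
      rw [pow_two, AlgEquiv.mul_apply, ← map_neg, ← map_mul, haz]
    have haz2 : -(σ ^ 2) a * (σ ^ 3) z = (σ ^ 2) z := by
      rw [pow_succ σ 2, AlgEquiv.mul_apply, ← map_neg, ← map_mul, haz]
    linear_combination -(σ ^ 3) z * hnorm + a * σ a * haz2 - a * haz1 + haz
  have hz4 : (σ ^ 4) z = σ z := by rw [pow_succ', AlgEquiv.mul_apply, hz3]
  refine monic_mem_orbit_of_twist hz ?_ (by rw [hz4])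
  rw [hz4]
  linear_combination -haz

theorem mem_orbit_of_finrank_eq_fifteen (hσ : orderOf σ = finrank K L) (hn : finrank K L = 15)
    (hab : monicTriple a b ∈ fullTriples σ) :
    monicTriple a b ∈ MulAction.orbit (ScalingGroup σ) (monicTriple (-1) (-1)) := by
  obtain ⟨h2, hprod⟩ := two_eq_zero_and_stepThreeProd_eq_one hσ hn hab
  have horder : orderOf (σ ^ 3) = 5 := by
    rw [orderOf_pow_of_dvd three_ne_zero (by rw [hσ, hn]; norm_num), hσ, hn]
  have hnorm : ∏ i ∈ range (orderOf (σ ^ 3)), (σ ^ (3 * i)) (-b) = 1 := by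
    simp only [horder, prod_range_succ, prod_range_zero, map_neg, Nat.reduceMul]
    simp only [stepThreeProd, Nat.reduceAdd] at hprod
    linear_combination -hprod - h2
  obtain ⟨a', horbit⟩ := exists_mem_orbit_monicTriple_neg_one (a := a) (by lia) hnorm
  have hfull' := mem_fullTriples_of_mem_orbit hab (MulAction.mem_orbit_symm.mp horbit)
  have horbit' := mem_orbit_of_finrank_eq_fifteen_of_neg_one hσ hn hfull'
  rwa [MulAction.orbit_eq_iff.mpr horbit'] at horbit

theorem fullTriples_eq_orbit_of_finrank_eq_fifteen (hσ : orderOf σ = finrank K L)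
    (hn : finrank K L = 15) (h2 : (2 : K) = 0) :
    fullTriples σ = MulAction.orbit (ScalingGroup σ) (monicTriple (-1) (-1)) := by
  refine fullTriples_eq_orbit hσ (by lia) ?_ fun a b => mem_orbit_of_finrank_eq_fifteen hσ hn
  have hdvd : (X ^ 4 - C (-1) * X - C (-1) : K[X]) ∣ X ^ finrank K L - 1 := by
    refine ⟨X ^ 11 + X ^ 8 + X ^ 7 + X ^ 5 + X ^ 3 + X ^ 2 + X + 1, ?_⟩
    have h2X : (2 : K[X]) = 0 := by rw [← C_ofNat, h2, C_0]
    rw [hn, C_neg, C_1]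
    linear_combination -(1 + X + X ^ 2 + X ^ 3 + X ^ 4 + X ^ 5 + X ^ 6 + X ^ 7 + X ^ 8 + X ^ 9
      + X ^ 11 + X ^ 12) * h2X
  simpa using monicTriple_mem_fullTriples_of_dvd hσ hdvd

end Classification

section Counting

variable {K L : Type*} [Field K] [Field L] [Algebra K L] {σ : L ≃ₐ[K] L}

theorem card_fixedUnits [Finite L] {τ : L ≃ₐ[K] L} {m : ℕ} (hm : m * orderOf τ = finrank K L) :
    Nat.card {ν : Lˣ // τ ν = ν} = Nat.card K ^ m - 1 := by
  have : FiniteDimensional K L := .of_finite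
  let F := IntermediateField.fixedField (Subgroup.zpowers τ)
  have hfinrank : finrank K F = m := Nat.eq_of_mul_eq_mul_right (orderOf_pos τ)
    ((finrank_fixedField_zpowers_mul_orderOf τ).trans hm.symm)
  let e : {ν : Lˣ // τ ν = ν} ≃ {x : F // x ≠ 0} :=
    { toFun := fun ν => ⟨⟨ν.1, mem_fixedField_zpowers_iff.mpr ν.2⟩, fun h =>
        ν.1.ne_zero (congrArg Subtype.val h)⟩
      invFun := fun x => ⟨Units.mk0 x.1 (by simpa using x.2), mem_fixedField_zpowers_iff.mp x.1.2⟩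
      left_inv := fun ν => by ext; rfl
      right_inv := fun x => by ext; rfl }
  rw [Nat.card_congr e, ← Nat.card_congr unitsEquivNeZero, Nat.card_units,
    Module.natCard_eq_pow_finrank (K := K), hfinrank]

theorem card_stabilizer_eq_card_fixedUnits {t : L × L × L} {τ : L ≃ₐ[K] L}
    (ht : ∀ g : ScalingGroup σ, g • t = t ↔ g.1 * g.2 = 1 ∧ τ g.2 = g.2) :
    Nat.card (MulAction.stabilizer (ScalingGroup σ) t) = Nat.card {ν : Lˣ // τ ν = ν} :=
  Nat.card_congr
    { toFun := fun g => ⟨g.1.2, ((ht _).mp g.2).2⟩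
      invFun := fun ν => ⟨(ν.1⁻¹, ν.1), (ht _).mpr ⟨inv_mul_cancel _, ν.2⟩⟩
      left_inv := fun g => Subtype.ext <|
        Prod.ext (eq_inv_of_mul_eq_one_left ((ht _).mp g.2).1).symm rfl
      right_inv := fun _ => rfl }

theorem smul_monicTriple_one_zero_eq_self_iff (g : ScalingGroup σ) :
    g • (monicTriple 1 0 : L × L × L) = monicTriple 1 0 ↔
      g.1 * g.2 = 1 ∧ (σ ^ 4) g.2 = g.2 := by
  simp only [scaling_smul_def, monicTriple, Prod.mk.injEq, Units.ext_iff, Units.val_mul,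
    Units.val_one, neg_zero, mul_zero, mul_neg, mul_one, neg_inj, true_and]
  refine and_congr_right fun hone => ⟨fun h => ?_, fun h => by rw [h, hone]⟩
  exact mul_left_cancel₀ g.1.ne_zero (h.trans hone.symm)

theorem smul_monicTriple_neg_one_neg_one_eq_self_iff (g : ScalingGroup σ) :
    g • (monicTriple (-1) (-1) : L × L × L) = monicTriple (-1) (-1) ↔
      g.1 * g.2 = 1 ∧ σ g.2 = g.2 := by
  simp only [scaling_smul_def, monicTriple, Prod.mk.injEq, Units.ext_iff, Units.val_mul,
    Units.val_one, neg_neg, mul_one]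
  refine and_congr_right fun hone => ⟨fun h => ?_, fun h => ⟨by rw [h, hone], ?_⟩⟩
  · exact mul_left_cancel₀ g.1.ne_zero (h.1.trans hone.symm)
  · have hpow : (σ ^ 4) (g.2 : L) = g.2 :=
      (MulAction.stabilizer (L ≃ₐ[K] L) (g.2 : L)).pow_mem h 4
    rw [hpow, hone]

theorem weightCount4_eq_zero (h : fullTriples σ = ∅) : weightCount4 K L σ = 0 := by
  rw [weightCount4_eq_card_fullTriples, h, Nat.card_of_isEmpty]

theorem weightCount4_of_fullTriples_eq_orbit [Finite L] {t : L × L × L} {τ : L ≃ₐ[K] L}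
    {m : ℕ} (hm : m * orderOf τ = finrank K L)
    (hfull : fullTriples σ = MulAction.orbit (ScalingGroup σ) t)
    (ht : ∀ g : ScalingGroup σ, g • t = t ↔ g.1 * g.2 = 1 ∧ τ g.2 = g.2) :
    weightCount4 K L σ = (Nat.card L - 1) ^ 2 / (Nat.card K ^ m - 1) := by
  have hstab := card_stabilizer_eq_card_fixedUnits ht
  rw [card_fixedUnits hm] at hstab
  have hcount : weightCount4 K L σ * (Nat.card K ^ m - 1) = (Nat.card L - 1) ^ 2 := by
    rw [weightCount4_eq_card_fullTriples, hfull, ← hstab, ← Nat.card_prod,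
      Nat.card_congr (MulAction.orbitProdStabilizerEquivGroup (ScalingGroup σ) t)]
    change Nat.card (Lˣ × Lˣ) = _
    rw [Nat.card_prod, Nat.card_units, sq]
  have : Finite (ScalingGroup σ) := inferInstanceAs (Finite (Lˣ × Lˣ))
  rw [← hcount, Nat.mul_div_cancel _ (hstab ▸ Nat.card_pos)]

theorem weightCount4_of_fullTriples_eq_orbit_one_zero [Finite L] (hσ : orderOf σ = finrank K L)
    (hdvd : 4 ∣ finrank K L)
    (hfull : fullTriples σ = MulAction.orbit (ScalingGroup σ) (monicTriple 1 0)) :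
    weightCount4 K L σ = (Nat.card L - 1) ^ 2 / (Nat.card K ^ 4 - 1) := by
  refine weightCount4_of_fullTriples_eq_orbit ?_ hfull smul_monicTriple_one_zero_eq_self_iff
  rw [orderOf_pow_of_dvd four_ne_zero (by rwa [hσ]), hσ, Nat.mul_div_cancel' hdvd]

theorem weightCount4_of_fullTriples_eq_orbit_neg_one_neg_one [Finite L]
    (hσ : orderOf σ = finrank K L)
    (hfull : fullTriples σ = MulAction.orbit (ScalingGroup σ) (monicTriple (-1) (-1))) :
    weightCount4 K L σ = (Nat.card L - 1) ^ 2 / (Nat.card K - 1) := by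
  rw [weightCount4_of_fullTriples_eq_orbit ((one_mul _).trans hσ) hfull
    smul_monicTriple_neg_one_neg_one_eq_self_iff, pow_one]

end Counting

section FiniteFields

variable {K L : Type*} [Field K] [Field L] [Algebra K L] {σ : L ≃ₐ[K] L}

theorem finrank_eq_of_card_eq_pow [Finite L] {n : ℕ} (h : Nat.card L = Nat.card K ^ n) :
    finrank K L = n := by
  have : Finite K := .of_injective _ (algebraMap K L).injective
  rw [Module.natCard_eq_pow_finrank (K := K)] at h
  exact Nat.pow_right_injective Finite.one_lt_card h

theorem orderOf_eq_finrank_of_forall_eq_pow [Fintype K] [Finite L] {s : ℕ}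
    (hs : s.Coprime (finrank K L)) (hσ : ∀ x, σ x = x ^ Fintype.card K ^ s) :
    orderOf σ = finrank K L := by
  have hpow : σ = FiniteField.frobeniusAlgEquivOfAlgebraic K L ^ s := by
    ext x
    rw [hσ, AlgEquiv.coe_pow, FiniteField.coe_frobeniusAlgEquivOfAlgebraic_iterate]
  have horder := FiniteField.orderOf_frobeniusAlgEquivOfAlgebraic K L
  rw [hpow, Nat.Coprime.orderOf_pow (by rw [horder]; exact hs.symm), horder]

theorem natCast_eq_zero_iff_dvd_card [Fintype K] {r : ℕ} (hr : r.Prime) :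
    (r : K) = 0 ↔ r ∣ Fintype.card K := by
  have : Fact r.Prime := ⟨hr⟩
  rw [← prime_dvd_char_iff_dvd_card, ← not_iff_not, ← isUnit_iff_not_dvd_char, isUnit_iff_ne_zero]

theorem two_eq_zero_iff_even_card [Fintype K] : (2 : K) = 0 ↔ Even (Fintype.card K) := by
  rw [even_iff_two_dvd]
  exact natCast_eq_zero_iff_dvd_card Nat.prime_two

theorem natCast_eq_zero_iff_exists_card_eq_pow [Fintype K] {r : ℕ} (hr : r.Prime) :
    (r : K) = 0 ↔ ∃ m : ℕ, Fintype.card K = r ^ m := by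
  rw [natCast_eq_zero_iff_dvd_card hr]
  constructor
  · intro hdvd
    obtain ⟨p, m, hp, -, hcard⟩ := FiniteField.isPrimePow_card K
    rw [← hcard] at hdvd
    exact ⟨m, (Nat.prime_dvd_prime_iff_eq hr hp.nat_prime).mp (hr.dvd_of_dvd_pow hdvd) ▸ hcard.symm⟩
  · rintro ⟨m, hcard⟩
    refine hcard ▸ dvd_pow_self r ?_
    rintro rfl
    exact Fintype.one_lt_card.ne' hcard

end FiniteFields

/-- With `σ : x ↦ x^{q^s}`, `gcd(s,n) = 1`, a generator of
`Gal(F_{q^n}/F_q)`, and `D` the number of triples `(c₀,c₁,c₄)` whose associated map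
`x ↦ c₀x + c₁σ(x) + c₄σ⁴(x)` has kernel dimension exactly `4`: `D = 0` for
`5 ≤ n ≤ 11`, `n ≠ 8`; `D = (qⁿ-1)²/(q⁴-1)` for `n ∈ {8,12}`; for `n = 13`, `D = 0` if
`q` is not a power of `3` and `D = (q¹³-1)²/(q-1)` otherwise; for `n = 15`, `D = 0` if
`q` is odd and `D = (q¹⁵-1)²/(q-1)` if `q` is even. -/
theorem stmt_16 (p q : ℕ) (hp : p.Prime) (hq : ∃ m : ℕ, 0 < m ∧ q = p ^ m)
    (K L : Type*) [Field K] [Field L] [Fintype K] [Fintype L] [Algebra K L]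
    (hcardK : Fintype.card K = q)
    (n : ℕ) (hn : 0 < n) (hcardL : Fintype.card L = q ^ n)
    (s : ℕ) (hs : 0 < s) (hsn : Nat.gcd s n = 1)
    (σ : L ≃ₐ[K] L) (hσ : ∀ x : L, σ x = x ^ q ^ s) :
    (5 ≤ n → n ≤ 11 → n ≠ 8 → weightCount4 K L σ = 0)
      ∧ (n = 8 ∨ n = 12 → weightCount4 K L σ = (q ^ n - 1) ^ 2 / (q ^ 4 - 1))
      ∧ (n = 13 →
          ((¬ ∃ m : ℕ, q = 3 ^ m) → weightCount4 K L σ = 0)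
            ∧ ((∃ m : ℕ, q = 3 ^ m) → weightCount4 K L σ = (q ^ 13 - 1) ^ 2 / (q - 1)))
      ∧ (n = 15 →
          (Odd q → weightCount4 K L σ = 0)
            ∧ (Even q → weightCount4 K L σ = (q ^ 15 - 1) ^ 2 / (q - 1))) := by
  subst hcardK
  obtain rfl : finrank K L = n :=
    finrank_eq_of_card_eq_pow (by simpa only [Nat.card_eq_fintype_card] using hcardL)
  have hord : orderOf σ = finrank K L := orderOf_eq_finrank_of_forall_eq_pow hsn hσ
  have h3 : (3 : K) = 0 ↔ ∃ m : ℕ, Fintype.card K = 3 ^ m :=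
    natCast_eq_zero_iff_exists_card_eq_pow Nat.prime_three
  rw [← h3, ← Nat.not_even_iff_odd, ← two_eq_zero_iff_even_card]
  refine ⟨fun h5 h11 h8 => weightCount4_eq_zero (fullTriples_eq_empty_of_le_eleven hord h5 h11 h8),
    fun hdim => ?_,
    fun hdim => ⟨fun h => weightCount4_eq_zero
      (fullTriples_eq_empty_of_finrank_eq_thirteen hord hdim h), fun h => ?_⟩,
    fun hdim => ⟨fun h => weightCount4_eq_zero
      (fullTriples_eq_empty_of_finrank_eq_fifteen hord hdim h), fun h => ?_⟩⟩
  · simpa only [Nat.card_eq_fintype_card, hcardL] using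
      weightCount4_of_fullTriples_eq_orbit_one_zero hord (by lia)
        (fullTriples_eq_orbit_of_finrank_eight_or_twelve hord hdim)
  · simpa only [Nat.card_eq_fintype_card, hcardL, hdim] using
      weightCount4_of_fullTriples_eq_orbit_neg_one_neg_one hord
        (fullTriples_eq_orbit_of_finrank_eq_thirteen hord hdim h)
  · simpa only [Nat.card_eq_fintype_card, hcardL, hdim] using
      weightCount4_of_fullTriples_eq_orbit_neg_one_neg_one hord
        (fullTriples_eq_orbit_of_finrank_eq_fifteen hord hdim h)
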